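/- Falik–Samorodnitsky variance bound: Let m be a positive integer, p∈(0,1) with p ≠ 1/2, and let f:{0,1}^m → ℝ be non-constant on the support of P_p (so that var(f) > 0). Then ((1−2p)/log((1−p)/p)) · var(f) · log(var(f)/ℰ₁(f)) ≤ ℰ₂(f), where var(f) is the variance of f under P_p. -/

import Mathlib

open scoped Classical

noncomputable section

/-- Weight of a configuration `x ∈ {0,1}^m` under the product Bernoulli(`p`) measure. -/
def cubeWeight (m : ℕ) (p : ℝ) (x : Fin m → Bool) : ℝ :=
  ∏ i : Fin m, if x i then p else 1 - p

/-- Expectation under the product Bernoulli(`p`) measure on `{0,1}^m`. -/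
def cubeExp (m : ℕ) (p : ℝ) (f : (Fin m → Bool) → ℝ) : ℝ :=
  ∑ x : Fin m → Bool, cubeWeight m p x * f x

/-- Variance under the product Bernoulli(`p`) measure on `{0,1}^m`. -/
def cubeVar (m : ℕ) (p : ℝ) (f : (Fin m → Bool) → ℝ) : ℝ :=
  cubeExp m p fun x => (f x - cubeExp m p f) ^ 2

/-- `Δ_e f (x) = f x − (p f(x∪{e}) + (1−p) f(x∖{e}))`. -/
def delta (m : ℕ) (p : ℝ) (f : (Fin m → Bool) → ℝ) (e : Fin m) (x : Fin m → Bool) : ℝ :=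
  f x - (p * f (Function.update x e true) + (1 - p) * f (Function.update x e false))

/-- `ℰ₂(f) = Σ_e E_p[|Δ_e f|²]`. -/
def calE₂ (m : ℕ) (p : ℝ) (f : (Fin m → Bool) → ℝ) : ℝ :=
  ∑ e : Fin m, cubeExp m p fun x => |delta m p f e x| ^ 2

/-- `ℰ₁(f) = Σ_e (E_p[|Δ_e f|])²`. -/
def calE₁ (m : ℕ) (p : ℝ) (f : (Fin m → Bool) → ℝ) : ℝ :=
  ∑ e : Fin m, (cubeExp m p fun x => |delta m p f e x|) ^ 2

open Filter Topology

lemma gconv_term (a : ℝ) (h0 : 0 ≤ a) (h1 : a ≤ 1) :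
    ConvexOn ℝ (Set.Ioi (0:ℝ)) (fun u => (1 + u ^ a)⁻¹) := by
  have hc : ConcaveOn ℝ (Set.Ioi (0:ℝ)) (fun u : ℝ => u ^ a) :=
    (Real.concaveOn_rpow h0 h1).subset Set.Ioi_subset_Ici_self (convex_Ioi 0)
  refine ⟨convex_Ioi 0, ?_⟩
  intro x hx y hy s t hs ht hst
  have hx' : (0:ℝ) < x := hx
  have hy' : (0:ℝ) < y := hy
  have h := hc.2 hx hy hs ht hst
  simp only [smul_eq_mul] at h ⊢
  set X := x ^ a with hX
  set Y := y ^ a with hY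
  have hXp : 0 < X := Real.rpow_pos_of_pos hx' a
  have hYp : 0 < Y := Real.rpow_pos_of_pos hy' a
  have hpos : 0 < 1 + (s * X + t * Y) := by positivity
  calc (1 + (s * x + t * y) ^ a)⁻¹ ≤ (1 + (s * X + t * Y))⁻¹ := by
        apply inv_anti₀ hpos; linarith
    _ ≤ s * (1 + X)⁻¹ + t * (1 + Y)⁻¹ := by
        have e : t = 1 - s := by linarith
        subst e
        rw [inv_le_iff_one_le_mul₀ hpos]
        have : (s * (1 + X)⁻¹ + (1 - s) * (1 + Y)⁻¹) * (1 + (s * X + (1 - s) * Y)) - 1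
          = s * (1 - s) * (X - Y) ^ 2 * ((1 + X)⁻¹ * (1 + Y)⁻¹) := by
          field_simp; ring
        have h2 : 0 ≤ s * (1 - s) * (X - Y) ^ 2 * ((1 + X)⁻¹ * (1 + Y)⁻¹) := by positivity
        linarith

/-- Partial sums. -/
noncomputable def gpart (n : ℕ) (u : ℝ) : ℝ :=
  ∑ k ∈ Finset.range n, ((1:ℝ)/2) ^ (k+1) * (1 + u ^ (((1:ℝ)/2) ^ (k+1)))⁻¹

noncomputable def gfun (u : ℝ) : ℝ :=
  if u = 1 then 1/2 else (Real.log u)⁻¹ - (u - 1)⁻¹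

lemma gpart_convex (n : ℕ) : ConvexOn ℝ (Set.Ioi (0:ℝ)) (gpart n) := by
  induction n with
  | zero => 
    have : gpart 0 = fun _ => 0 := by funext u; simp [gpart]
    rw [this]; exact convexOn_const 0 (convex_Ioi 0)
  | succ n ih =>
    have : gpart (n+1) = gpart n + fun u => ((1:ℝ)/2) ^ (n+1) • (1 + u ^ (((1:ℝ)/2) ^ (n+1)))⁻¹ := by
      funext u; simp [gpart, Finset.sum_range_succ]
    rw [this]
    exact ih.add ((gconv_term _ (by positivity) (pow_le_one₀ (by norm_num) (by norm_num))).smul (by positivity))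

lemma rpow_ne_one {u a : ℝ} (hu : 0 < u) (h1 : u ≠ 1) (ha : 0 < a) : u ^ a ≠ 1 := by
  intro h
  have := congrArg Real.log h
  rw [Real.log_rpow hu, Real.log_one] at this
  rcases mul_eq_zero.1 this with h' | h'
  · exact ha.ne' h'
  · exact Real.log_ne_zero_of_pos_of_ne_one hu h1 h'

lemma gpart_eq (n : ℕ) (u : ℝ) (hu : 0 < u) (h1 : u ≠ 1) :
    gpart n u = (((1:ℝ)/2) ^ n) * (u ^ (((1:ℝ)/2) ^ n) - 1)⁻¹ - (u - 1)⁻¹ := by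
  induction n with
  | zero => simp [gpart]
  | succ n ih =>
    have : gpart (n+1) u = gpart n u + ((1:ℝ)/2) ^ (n+1) * (1 + u ^ (((1:ℝ)/2) ^ (n+1)))⁻¹ := by
      simp [gpart, Finset.sum_range_succ]
    rw [this, ih]
    have hy : u ^ (((1:ℝ)/2) ^ n) = (u ^ (((1:ℝ)/2) ^ (n+1))) ^ 2 := by
      rw [sq, ← Real.rpow_add hu]; congr 1; ring
    have hne := rpow_ne_one hu h1 (a := ((1:ℝ)/2) ^ (n+1)) (by positivity)
    have hp := Real.rpow_pos_of_pos hu (((1:ℝ)/2) ^ (n+1))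
    rw [hy]
    set y := u ^ (((1:ℝ)/2) ^ (n+1))
    have h3 : y - 1 ≠ 0 := sub_ne_zero.2 hne
    have h4 : 1 + y ≠ 0 := by positivity
    have h5 : y ^ 2 - 1 = (y - 1) * (1 + y) := by ring
    rw [h5, pow_succ]
    field_simp
    ring

lemma gpart_tendsto (u : ℝ) (hu : 0 < u) : Tendsto (fun n => gpart n u) atTop (𝓝 (gfun u)) := by
  by_cases h1 : u = 1
  · subst h1
    have : ∀ n, gpart n 1 = 1/2 - (1/2) * (1/2) ^ n := by
      intro n
      induction n with
      | zero => simp [gpart]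
      | succ n ih =>
        have : gpart (n+1) 1 = gpart n 1 + ((1:ℝ)/2) ^ (n+1) * (1 + 1 ^ (((1:ℝ)/2) ^ (n+1)))⁻¹ := by
          simp [gpart, Finset.sum_range_succ]
        rw [this, ih, Real.one_rpow]; ring
    simp only [this, gfun, if_true]
    have := (tendsto_pow_atTop_nhds_zero_of_lt_one (r := (1:ℝ)/2) (by norm_num) (by norm_num)).const_mul (1/2)
    have h3 := this.const_sub (1/2)
    rw [mul_zero, sub_zero] at h3
    exact h3
  · simp only [gpart_eq _ u hu h1, gfun, h1, if_false]
    apply Tendsto.sub_const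
    have hd : HasDerivAt (fun t : ℝ => u ^ t) (Real.log u) 0 := by
      simpa using (Real.hasStrictDerivAt_const_rpow hu 0).hasDerivAt
    have hs := hasDerivAt_iff_tendsto_slope.1 hd
    have ht : Tendsto (fun n : ℕ => ((1:ℝ)/2) ^ n) atTop (𝓝[≠] 0) := by
      refine tendsto_nhdsWithin_iff.2 ⟨tendsto_pow_atTop_nhds_zero_of_lt_one (by norm_num) (by norm_num), ?_⟩
      exact Eventually.of_forall fun n => by simp
    have := (hs.comp ht).inv₀ (Real.log_ne_zero_of_pos_of_ne_one hu h1)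
    refine this.congr fun n => ?_
    simp [slope_def_field, mul_comm, div_eq_mul_inv]

lemma gfun_convex : ConvexOn ℝ (Set.Ioi (0:ℝ)) gfun := by
  refine ⟨convex_Ioi 0, ?_⟩
  intro x hx y hy s t hs ht hst
  have hxy : s • x + t • y ∈ Set.Ioi (0:ℝ) := convex_Ioi 0 hx hy hs ht hst
  exact le_of_tendsto_of_tendsto' (gpart_tendsto _ hxy)
    (((gpart_tendsto x hx).const_smul s).add ((gpart_tendsto y hy).const_smul t))
    fun n => (gpart_convex n).2 hx hy hs ht hst

lemma gfun_hasDerivAt {u : ℝ} (hu : 0 < u) (h1 : u ≠ 1) :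
    HasDerivAt gfun (-(u⁻¹ / Real.log u ^ 2) + 1 / (u - 1) ^ 2) u := by
  have hl := Real.log_ne_zero_of_pos_of_ne_one hu h1
  have h := ((Real.hasDerivAt_log hu.ne').inv hl).sub
    (((hasDerivAt_id u).sub_const 1).inv (sub_ne_zero.2 h1))
  have h2 := h.congr_of_eventuallyEq (f₁ := gfun) (by
    filter_upwards [isOpen_ne.mem_nhds h1] with z hz
    have hz' : z ≠ 1 := hz
    simp [gfun, hz'])
  have e : -(u⁻¹ / Real.log u ^ 2) + 1 / (u - 1) ^ 2 = -u⁻¹ / Real.log u ^ 2 - -1 / (id u - 1) ^ 2 := by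
    simp only [id]; ring
  rw [e]; exact h2

/-- tangent line inequality -/
lemma gfun_tangent {u v : ℝ} (hu : 0 < u) (h1 : u ≠ 1) (hv : 0 < v) :
    gfun u + (-(u⁻¹ / Real.log u ^ 2) + 1 / (u - 1) ^ 2) * (v - u) ≤ gfun v := by
  have hd := gfun_hasDerivAt hu h1
  rcases lt_trichotomy u v with h | h | h
  · have := gfun_convex.le_slope_of_hasDerivAt (x := u) (y := v) hu hv h hd
    rw [slope_def_field, le_div_iff₀ (by linarith)] at this
    linarith
  · subst h; simp
  · have := gfun_convex.slope_le_of_hasDerivAt (x := v) (y := u) hv hu h hd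
    rw [slope_def_field, div_le_iff₀ (by linarith)] at this
    linarith

lemma key_one {p u v : ℝ} (hp0 : 0 < p) (hp1 : p < 1) (hp' : p ≠ 1/2) (hu : 0 < u) (hv : 0 < v)
    (h : p * u + (1 - p) * v = 1) (hu1 : u ≠ 1) :
    (1 - 2 * p) / Real.log ((1 - p) / p) ≤ (1 - p) / Real.log u + p / Real.log v := by
  have hq : 0 < 1 - p := by linarith
  have hv1 : v ≠ 1 := by
    intro h'; subst h'; apply hu1
    have : p * (u - 1) = 0 := by linarith
    rcases mul_eq_zero.1 this with h | h <;> linarith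
  have h2 : 1 - 2 * p ≠ 0 := by intro h; apply hp'; linarith
  have e1 : (1 - p) / p ≠ 1 := by
    rw [Ne, div_eq_one_iff_eq hp0.ne']; intro h; apply h2; linarith
  have e2 : p / (1 - p) ≠ 1 := by
    rw [Ne, div_eq_one_iff_eq hq.ne']; intro h; apply h2; linarith
  have t1 := gfun_tangent (u := (1-p)/p) (v := u) (by positivity) e1 hu
  have t2 := gfun_tangent (u := p/(1-p)) (v := v) (by positivity) e2 hv
  have hlog : Real.log (p / (1 - p)) = - Real.log ((1-p)/p) := by
    rw [← Real.log_inv, inv_div]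
  have hL : Real.log ((1-p)/p) ≠ 0 := Real.log_ne_zero_of_pos_of_ne_one (by positivity) e1
  simp only [gfun, e1, e2, hu1, hv1, if_false, hlog] at t1 t2
  set L := Real.log ((1-p)/p)
  have hc1 : ((1-p)/p - 1) = (1 - 2*p)/p := by field_simp; ring
  have hc2 : (p/(1-p) - 1) = -(1 - 2*p)/(1-p) := by field_simp; ring
  rw [hc1] at t1
  rw [hc2] at t2
  -- parametrise
  obtain ⟨s, hs⟩ : ∃ s, s = (u - 1) / (1 - p) := ⟨_, rfl⟩
  have hus : u = 1 + (1 - p) * s := by rw [hs]; field_simp; ring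
  have hvs : v = 1 - p * s := by
    have : (1 - p) * (v - (1 - p * s)) = 0 := by rw [hus] at h; linear_combination h
    rcases mul_eq_zero.1 this with h | h <;> linarith
  have hs0 : s ≠ 0 := by intro h; apply hu1; rw [hus, h]; ring
  have a1 : (u - 1)⁻¹ = s⁻¹ / (1 - p) := by rw [hus]; field_simp; ring
  have a2 : (v - 1)⁻¹ = - s⁻¹ / p := by rw [hvs]; field_simp; ring
  rw [a1] at t1
  rw [a2] at t2
  have t1' := mul_le_mul_of_nonneg_left t1 hq.le
  have t2' := mul_le_mul_of_nonneg_left t2 hp0.le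
  have r : (1 - p) * ((Real.log u)⁻¹ - s⁻¹ / (1 - p)) + p * ((Real.log v)⁻¹ - -s⁻¹ / p)
      = (1 - p) / Real.log u + p / Real.log v := by
    field_simp; ring
  have l : (1 - p) * (L⁻¹ - ((1 - 2*p)/p)⁻¹ + (-(((1 - p) / p)⁻¹ / L ^ 2) + 1 / ((1 - 2*p)/p) ^ 2) * (u - (1-p)/p))
     + p * ((-L)⁻¹ - (-(1 - 2*p)/(1-p))⁻¹ + (-((p / (1 - p))⁻¹ / (-L) ^ 2) + 1 / (-(1 - 2*p)/(1-p)) ^ 2) * (v - p/(1-p)))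
     = (1 - 2 * p) / L := by
    rw [hus, hvs]
    field_simp
    ring
  linarith

lemma two_point_aux {p q C a b x w : ℝ} (hp : 0 < p) (hq : 0 < q) (hC : 0 < C) (hx : 0 < x) (hw : 0 < w)
    (h : 1 / C ≤ q / x - p / w) :
    p * a ^ 2 * x - q * b ^ 2 * w ≤ C * (p * q * (a - b) ^ 2) := by
  have h1 : x * (w + C * p) ≤ C * q * w := by
    have := mul_le_mul_of_nonneg_left h (show 0 ≤ C * x * w by positivity)
    have e1 : C * x * w * (1 / C) = x * w := by field_simp
    have e2 : C * x * w * (q / x - p / w) = C * q * w - C * p * x := by field_simp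
    rw [e1, e2] at this; linarith
  have hpos : 0 < w + C * p := by positivity
  have h2 : p * a ^ 2 * (x * (w + C * p)) ≤ p * a ^ 2 * (C * q * w) :=
    mul_le_mul_of_nonneg_left h1 (by positivity)
  have h3 : 0 ≤ q * (C * p * (a - b) - b * w) ^ 2 := by positivity
  refine le_of_mul_le_mul_right ?_ hpos
  linarith

lemma const_pos {p : ℝ} (hp0 : 0 < p) (hp1 : p < 1) (hp' : p ≠ 1/2) :
    0 < (1 - 2 * p) / Real.log ((1 - p) / p) := by
  rcases lt_or_gt_of_ne hp' with h | h
  · exact div_pos (by linarith) (Real.log_pos (by rw [lt_div_iff₀ hp0]; linarith))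
  · exact div_pos_of_neg_of_neg (by linarith)
      (Real.log_neg (div_pos (by linarith) hp0) (by rw [div_lt_iff₀ hp0]; linarith))

lemma two_point {p u v a b : ℝ} (hp0 : 0 < p) (hp1 : p < 1) (hp' : p ≠ 1/2) (hu : 0 < u) (hv : 0 < v)
    (h : p * u + (1 - p) * v = 1) :
    p * (a ^ 2 * Real.log u) + (1 - p) * (b ^ 2 * Real.log v) ≤
      ((1 - 2 * p) / Real.log ((1 - p) / p))⁻¹ * (p * (1 - p) * (a - b) ^ 2) := by
  have hq : 0 < 1 - p := by linarith
  have hC := const_pos hp0 hp1 hp'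
  by_cases hu1 : u = 1
  · have : v = 1 := by
      subst hu1
      have : (1 - p) * (v - 1) = 0 := by linarith
      rcases mul_eq_zero.1 this with h | h <;> linarith
    subst hu1; subst this
    simp only [Real.log_one]
    have : 0 ≤ ((1 - 2 * p) / Real.log ((1 - p) / p))⁻¹ * (p * (1 - p) * (a - b) ^ 2) := by positivity
    linarith
  have k := key_one hp0 hp1 hp' hu hv h hu1
  set K := (1 - 2 * p) / Real.log ((1 - p) / p)
  rcases lt_or_gt_of_ne hu1 with hlt | hgt
  · have hv1 : 1 < v := by
      by_contra hv1
      nlinarith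
    have hx := Real.log_pos hv1
    have hw := Real.log_neg hu hlt
    have := two_point_aux (p := 1 - p) (q := p) (C := K⁻¹) (a := b) (b := a) (x := Real.log v) (w := - Real.log u)
      hq hp0 (by positivity) hx (by linarith) (by rw [div_neg]; simp only [one_div, inv_inv]; linarith)
    calc _ = (1 - p) * b ^ 2 * Real.log v - p * a ^ 2 * -Real.log u := by ring
      _ ≤ _ := this
      _ = _ := by ring
  · have hv1 : v < 1 := by
      by_contra hv1
      nlinarith
    have hx := Real.log_pos hgt
    have hw := Real.log_neg hv hv1
    have := two_point_aux (p := p) (q := 1 - p) (C := K⁻¹) (a := a) (b := b) (x := Real.log u) (w := - Real.log v)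
      hp0 hq (by positivity) hx (by linarith) (by rw [div_neg]; simp only [one_div, inv_inv]; linarith)
    calc _ = p * a ^ 2 * Real.log u - (1 - p) * b ^ 2 * -Real.log v := by ring
      _ ≤ _ := this
      _ = _ := by ring

/-- Averaging over coordinate `e`. -/
def avgC (m : ℕ) (p : ℝ) (e : Fin m) (f : (Fin m → Bool) → ℝ) (x : Fin m → Bool) : ℝ :=
  p * f (Function.update x e true) + (1 - p) * f (Function.update x e false)

lemma delta_eq (m : ℕ) (p : ℝ) (f : (Fin m → Bool) → ℝ) (e : Fin m) (x : Fin m → Bool) :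
    delta m p f e x = f x - avgC m p e f x := rfl

lemma weight_update (m : ℕ) (p : ℝ) (e : Fin m) (x : Fin m → Bool) (b : Bool) :
    cubeWeight m p (Function.update x e b) =
      (if b then p else 1 - p) * ∏ i ∈ Finset.univ.erase e, (if x i then p else 1 - p) := by
  unfold cubeWeight
  rw [← Finset.mul_prod_erase Finset.univ _ (Finset.mem_univ e)]
  congr 1
  · simp
  · refine Finset.prod_congr rfl fun i hi => ?_
    rw [Function.update_of_ne (Finset.ne_of_mem_erase hi)]

lemma sum_flip {m : ℕ} (e : Fin m) (F : (Fin m → Bool) → ℝ) :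
    2 * ∑ x, F x = ∑ x, (F (Function.update x e true) + F (Function.update x e false)) := by
  have hinv : Function.Involutive (fun x : Fin m → Bool => Function.update x e (!x e)) := by
    intro x; simp
  have h := Equiv.sum_comp hinv.toPerm F
  rw [two_mul]
  nth_rewrite 1 [← h]
  rw [← Finset.sum_add_distrib]
  refine Finset.sum_congr rfl fun x _ => ?_
  have hx : Function.update x e (x e) = x := Function.update_eq_self e x
  simp only [Function.Involutive.coe_toPerm]
  cases hb : x e
  · rw [hb] at hx; simp only [Bool.not_false]; rw [hx]
  · rw [hb] at hx; simp only [Bool.not_true]; rw [hx]; ring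

lemma avgC_update {m : ℕ} (p : ℝ) (e : Fin m) (f : (Fin m → Bool) → ℝ) (x : Fin m → Bool) (b : Bool) :
    avgC m p e f (Function.update x e b) = avgC m p e f x := by
  simp [avgC]

lemma exp_avg {m : ℕ} (p : ℝ) (e : Fin m) (f : (Fin m → Bool) → ℝ) :
    cubeExp m p (avgC m p e f) = cubeExp m p f := by
  have h1 := sum_flip e (fun x => cubeWeight m p x * avgC m p e f x)
  have h2 := sum_flip e (fun x => cubeWeight m p x * f x)
  have : 2 * cubeExp m p (avgC m p e f) = 2 * cubeExp m p f := by
    unfold cubeExp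
    rw [h1, h2]
    refine Finset.sum_congr rfl fun x _ => ?_
    simp only [weight_update, avgC_update]
    simp only [avgC, if_true, Bool.false_eq_true, if_false]
    ring
  linarith

lemma exp_one (m : ℕ) (p c : ℝ) : cubeExp m p (fun _ => c) = c := by
  unfold cubeExp cubeWeight
  rw [← Finset.sum_mul]
  have := Fintype.prod_sum (fun (_ : Fin m) (b : Bool) => if b then p else 1 - p)
  rw [← this]
  simp

lemma exp_mono {m : ℕ} {p : ℝ} (h0 : 0 < p) (h1 : p < 1) {f g : (Fin m → Bool) → ℝ} (h : ∀ x, f x ≤ g x) :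
    cubeExp m p f ≤ cubeExp m p g := by
  refine Finset.sum_le_sum fun x _ => mul_le_mul_of_nonneg_left (h x) ?_
  refine Finset.prod_nonneg fun i _ => ?_
  split_ifs <;> linarith

lemma exp_add {m : ℕ} (p : ℝ) (f g : (Fin m → Bool) → ℝ) :
    cubeExp m p (fun x => f x + g x) = cubeExp m p f + cubeExp m p g := by
  simp [cubeExp, mul_add, Finset.sum_add_distrib]

lemma exp_sub {m : ℕ} (p : ℝ) (f g : (Fin m → Bool) → ℝ) :
    cubeExp m p (fun x => f x - g x) = cubeExp m p f - cubeExp m p g := by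
  simp [cubeExp, mul_sub, Finset.sum_sub_distrib]

lemma exp_smul {m : ℕ} (p c : ℝ) (f : (Fin m → Bool) → ℝ) :
    cubeExp m p (fun x => c * f x) = c * cubeExp m p f := by
  simp only [cubeExp, Finset.mul_sum]
  exact Finset.sum_congr rfl fun x _ => by ring

lemma exp_sum {m : ℕ} (p : ℝ) (n : ℕ) (f : ℕ → (Fin m → Bool) → ℝ) :
    cubeExp m p (fun x => ∑ j ∈ Finset.range n, f j x) = ∑ j ∈ Finset.range n, cubeExp m p (f j) := by
  induction n with
  | zero => simp [cubeExp]
  | succ n ih => simp only [Finset.sum_range_succ]; rw [exp_add, ih]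

lemma avgC_comm {m : ℕ} (p : ℝ) (e e' : Fin m) (f : (Fin m → Bool) → ℝ) :
    avgC m p e (avgC m p e' f) = avgC m p e' (avgC m p e f) := by
  by_cases h : e = e'
  · subst h; rfl
  · funext x
    simp only [avgC]
    rw [Function.update_comm h, Function.update_comm h, Function.update_comm h, Function.update_comm h]
    ring

/-- Average over the first `j` coordinates. -/
def avgS (m : ℕ) (p : ℝ) : ℕ → ((Fin m → Bool) → ℝ) → ((Fin m → Bool) → ℝ)
  | 0, f => f
  | j + 1, f => if h : j < m then avgC m p ⟨j, h⟩ (avgS m p j f) else avgS m p j f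

lemma avgS_succ {m : ℕ} (p : ℝ) {j : ℕ} (h : j < m) (f : (Fin m → Bool) → ℝ) :
    avgS m p (j+1) f = avgC m p ⟨j, h⟩ (avgS m p j f) := by
  simp [avgS, h]

lemma avgC_sub {m : ℕ} (p : ℝ) (e : Fin m) (f g : (Fin m → Bool) → ℝ) :
    avgC m p e (fun x => f x - g x) = fun x => avgC m p e f x - avgC m p e g x := by
  funext x; simp only [avgC]; ring

lemma avgS_sub {m : ℕ} (p : ℝ) (j : ℕ) (f g : (Fin m → Bool) → ℝ) :
    avgS m p j (fun x => f x - g x) = fun x => avgS m p j f x - avgS m p j g x := by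
  induction j with
  | zero => rfl
  | succ j ih =>
    by_cases h : j < m
    · rw [avgS_succ p h, ih, avgC_sub, avgS_succ p h, avgS_succ p h]
    · simp only [avgS, h, dif_neg, not_false_eq_true]; exact ih

lemma avgS_avgC {m : ℕ} (p : ℝ) (j : ℕ) (e : Fin m) (f : (Fin m → Bool) → ℝ) :
    avgS m p j (avgC m p e f) = avgC m p e (avgS m p j f) := by
  induction j with
  | zero => rfl
  | succ j ih =>
    by_cases h : j < m
    · rw [avgS_succ p h, ih, avgC_comm, avgS_succ p h]
    · simp only [avgS, h, dif_neg, not_false_eq_true]; exact ih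

lemma avgS_delta {m : ℕ} (p : ℝ) (j : ℕ) (e : Fin m) (f : (Fin m → Bool) → ℝ) :
    avgS m p j (delta m p f e) = delta m p (avgS m p j f) e := by
  have : delta m p f e = fun x => f x - avgC m p e f x := rfl
  rw [this, avgS_sub, avgS_avgC]; rfl

lemma exp_avgS {m : ℕ} (p : ℝ) (j : ℕ) (f : (Fin m → Bool) → ℝ) :
    cubeExp m p (avgS m p j f) = cubeExp m p f := by
  induction j with
  | zero => rfl
  | succ j ih =>
    by_cases h : j < m
    · rw [avgS_succ p h, exp_avg, ih]
    · simp only [avgS, h, dif_neg, not_false_eq_true]; exact ih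

lemma avgS_update {m : ℕ} (p : ℝ) (j : ℕ) (f : (Fin m → Bool) → ℝ) (e : Fin m) (he : e.1 < j)
    (x : Fin m → Bool) (b : Bool) :
    avgS m p j f (Function.update x e b) = avgS m p j f x := by
  induction j generalizing x with
  | zero => omega
  | succ j ih =>
    by_cases h : j < m
    · rw [avgS_succ p h]
      by_cases hj : e = ⟨j, h⟩
      · rw [hj, avgC_update]
      · have hlt : e.1 < j := by
          have : e.1 ≠ j := fun h' => hj (Fin.ext h')
          omega
        simp only [avgC]
        rw [Function.update_comm hj, Function.update_comm hj, ih hlt, ih hlt]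
    · have := e.2
      simp only [avgS, h, dif_neg, not_false_eq_true]; exact ih (by omega) x

lemma avgS_last {m : ℕ} (p : ℝ) (f : (Fin m → Bool) → ℝ) (x : Fin m → Bool) :
    avgS m p m f x = cubeExp m p f := by
  have hconst : ∀ y, avgS m p m f y = avgS m p m f x := by
    intro y
    have : ∀ s : Finset (Fin m), avgS m p m f (s.piecewise y x) = avgS m p m f x := by
      intro s
      induction s using Finset.induction_on with
      | empty => simp
      | insert a s _ ih => rw [Finset.piecewise_insert, avgS_update p m f a a.2, ih]
    simpa using this Finset.univ
  rw [← exp_avgS p m f, show avgS m p m f = fun _ => avgS m p m f x from funext hconst, exp_one]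

lemma avgC_mono {m : ℕ} {p : ℝ} (h0 : 0 < p) (h1 : p < 1) (e : Fin m) {f g : (Fin m → Bool) → ℝ}
    (h : ∀ x, f x ≤ g x) (x : Fin m → Bool) : avgC m p e f x ≤ avgC m p e g x := by
  unfold avgC
  have h1' : 0 ≤ 1 - p := by linarith
  exact add_le_add (mul_le_mul_of_nonneg_left (h _) h0.le) (mul_le_mul_of_nonneg_left (h _) h1')

lemma avgS_pos {m : ℕ} {p : ℝ} (h0 : 0 < p) (h1 : p < 1) (j : ℕ) {g : (Fin m → Bool) → ℝ}
    (h : ∀ x, 0 < g x) (x : Fin m → Bool) : 0 < avgS m p j g x := by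
  induction j generalizing x with
  | zero => exact h x
  | succ j ih =>
    by_cases hj : j < m
    · rw [avgS_succ p hj]
      have h1' : 0 < 1 - p := by linarith
      exact add_pos (mul_pos h0 (ih _)) (mul_pos h1' (ih _))
    · simp only [avgS, hj, dif_neg, not_false_eq_true]; exact ih x

lemma exp_abs_avgS {m : ℕ} {p : ℝ} (h0 : 0 < p) (h1 : p < 1) (j : ℕ) (f : (Fin m → Bool) → ℝ) :
    cubeExp m p (fun x => |avgS m p j f x|) ≤ cubeExp m p (fun x => |f x|) := by
  induction j with
  | zero => exact le_refl _
  | succ j ih =>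
    by_cases hj : j < m
    · rw [avgS_succ p hj]
      refine le_trans ?_ ih
      rw [← exp_avg p ⟨j, hj⟩ (fun x => |avgS m p j f x|)]
      refine exp_mono h0 h1 fun x => ?_
      have h1' : 0 < 1 - p := by linarith
      unfold avgC
      refine (abs_add_le _ _).trans ?_
      rw [abs_mul, abs_mul, abs_of_pos h0, abs_of_pos h1']
    · simp only [avgS, hj, dif_neg, not_false_eq_true]; exact ih

/-- Martingale differences. -/
def mdiff (m : ℕ) (p : ℝ) (j : ℕ) (f : (Fin m → Bool) → ℝ) (x : Fin m → Bool) : ℝ :=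
  avgS m p j f x - avgS m p (j+1) f x

lemma mdiff_eq {m : ℕ} (p : ℝ) {j : ℕ} (h : j < m) (f : (Fin m → Bool) → ℝ) :
    mdiff m p j f = avgS m p j (delta m p f ⟨j, h⟩) := by
  rw [avgS_delta]; funext x; rw [mdiff, avgS_succ p h]; rfl

lemma delta_mdiff {m : ℕ} (p : ℝ) (j : ℕ) (e : Fin m) (f : (Fin m → Bool) → ℝ) :
    delta m p (mdiff m p j f) e = mdiff m p j (delta m p f e) := by
  funext x
  simp only [mdiff, avgS_delta]
  simp only [delta, mdiff]; ring

lemma exp_sq_delta {m : ℕ} (p : ℝ) (e : Fin m) (g : (Fin m → Bool) → ℝ) :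
    cubeExp m p (fun x => (g x - avgC m p e g x) ^ 2) =
      cubeExp m p (fun x => g x ^ 2) - cubeExp m p (fun x => avgC m p e g x ^ 2) := by
  have h1 : cubeExp m p (fun x => g x * avgC m p e g x) = cubeExp m p (fun x => avgC m p e g x ^ 2) := by
    rw [← exp_avg p e]
    congr 1
    funext x
    rw [show avgC m p e (fun x => g x * avgC m p e g x) x
      = p * (g (Function.update x e true) * avgC m p e g (Function.update x e true)) +
        (1 - p) * (g (Function.update x e false) * avgC m p e g (Function.update x e false)) from rfl]
    rw [avgC_update, avgC_update]
    simp only [avgC]; ring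
  have h2 : (fun x => (g x - avgC m p e g x) ^ 2) =
      fun x => (g x ^ 2 - 2 * (g x * avgC m p e g x)) + avgC m p e g x ^ 2 := by
    funext x; ring
  rw [h2, exp_add, exp_sub, exp_smul, h1]; ring

lemma sum_mdiff {m : ℕ} (p : ℝ) (f : (Fin m → Bool) → ℝ) :
    ∑ j ∈ Finset.range m, cubeExp m p (fun x => mdiff m p j f x ^ 2) =
      cubeExp m p (fun x => f x ^ 2) - cubeExp m p f ^ 2 := by
  have : ∀ j ∈ Finset.range m, cubeExp m p (fun x => mdiff m p j f x ^ 2) =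
      cubeExp m p (fun x => avgS m p j f x ^ 2) - cubeExp m p (fun x => avgS m p (j+1) f x ^ 2) := by
    intro j hj
    have hj' := Finset.mem_range.1 hj
    simp only [mdiff, avgS_succ p hj']
    exact exp_sq_delta p _ _
  rw [Finset.sum_congr rfl this, Finset.sum_range_sub' (fun j => cubeExp m p (fun x => avgS m p j f x ^ 2))]
  simp only [avgS_last, exp_one]
  rfl

lemma var_eq {m : ℕ} (p : ℝ) (f : (Fin m → Bool) → ℝ) :
    cubeVar m p f = cubeExp m p (fun x => f x ^ 2) - cubeExp m p f ^ 2 := by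
  unfold cubeVar
  have : (fun x => (f x - cubeExp m p f) ^ 2) =
    fun x => (f x ^ 2 - (2 * cubeExp m p f) * f x) + (cubeExp m p f) ^ 2 := by funext x; ring
  rw [this, exp_add, exp_sub, exp_smul, exp_one]; ring

/-- One-coordinate step of the log-Sobolev inequality. -/
lemma lsi_step {m : ℕ} {p : ℝ} (h0 : 0 < p) (h1 : p < 1) (hp' : p ≠ 1/2) (e : Fin m)
    (F g : (Fin m → Bool) → ℝ) (hg : ∀ x, 0 < g x) :
    cubeExp m p (fun x => F x ^ 2 * (Real.log (g x) - Real.log (avgC m p e g x))) ≤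
      ((1 - 2 * p) / Real.log ((1 - p) / p))⁻¹ * cubeExp m p (fun x => |delta m p F e x| ^ 2) := by
  have h1' : 0 < 1 - p := by linarith
  have hA : ∀ x, 0 < avgC m p e g x := fun x => add_pos (mul_pos h0 (hg _)) (mul_pos h1' (hg _))
  rw [← exp_smul, ← exp_avg p e, ← exp_avg p e (fun x => _ * |delta m p F e x| ^ 2)]
  refine exp_mono h0 h1 fun x => ?_
  have key := two_point (p := p) (u := g (Function.update x e true) / avgC m p e g x)
    (v := g (Function.update x e false) / avgC m p e g x)
    (a := F (Function.update x e true)) (b := F (Function.update x e false)) h0 h1 hp'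
    (div_pos (hg _) (hA x)) (div_pos (hg _) (hA x)) (by
      have := (hA x).ne'
      field_simp
      rfl)
  rw [Real.log_div (hg _).ne' (hA x).ne', Real.log_div (hg _).ne' (hA x).ne'] at key
  set K := ((1 - 2 * p) / Real.log ((1 - p) / p))⁻¹
  have l : avgC m p e (fun x => F x ^ 2 * (Real.log (g x) - Real.log (avgC m p e g x))) x =
    p * (F (Function.update x e true) ^ 2 * (Real.log (g (Function.update x e true)) - Real.log (avgC m p e g x))) +
    (1 - p) * (F (Function.update x e false) ^ 2 * (Real.log (g (Function.update x e false)) - Real.log (avgC m p e g x))) := by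
    rw [avgC, avgC_update, avgC_update]
  have r : avgC m p e (fun x => K * |delta m p F e x| ^ 2) x =
    K * (p * (1 - p) * (F (Function.update x e true) - F (Function.update x e false)) ^ 2) := by
    simp only [sq_abs]
    simp only [avgC, delta, Function.update_idem]
    ring
  rw [l, r]
  exact key

/-- Log-Sobolev inequality, dual form. -/
lemma lsi_dual {m : ℕ} {p : ℝ} (h0 : 0 < p) (h1 : p < 1) (hp' : p ≠ 1/2)
    (F g : (Fin m → Bool) → ℝ) (hg : ∀ x, 0 < g x) :
    cubeExp m p (fun x => F x ^ 2 * (Real.log (g x) - Real.log (cubeExp m p g))) ≤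
      ((1 - 2 * p) / Real.log ((1 - p) / p))⁻¹ * calE₂ m p F := by
  have e1 : (fun x => F x ^ 2 * (Real.log (g x) - Real.log (cubeExp m p g))) =
      fun x => ∑ j ∈ Finset.range m, F x ^ 2 *
        (Real.log (avgS m p j g x) - Real.log (avgS m p (j+1) g x)) := by
    funext x
    rw [← Finset.mul_sum, Finset.sum_range_sub' (fun j => Real.log (avgS m p j g x)), avgS_last]
    rfl
  rw [e1, exp_sum p m (fun j x => F x ^ 2 *
        (Real.log (avgS m p j g x) - Real.log (avgS m p (j+1) g x))), Finset.sum_range, calE₂, Finset.mul_sum]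
  refine Finset.sum_le_sum fun e _ => ?_
  rw [avgS_succ p e.2]
  exact lsi_step h0 h1 hp' e F _ (avgS_pos h0 h1 _ hg)

lemma exp_abs_pos {m : ℕ} {p : ℝ} (h0 : 0 < p) (h1 : p < 1) (d : (Fin m → Bool) → ℝ)
    (hd : 0 < cubeExp m p (fun x => d x ^ 2)) : 0 < cubeExp m p (fun x => |d x|) := by
  by_contra hn
  have h : cubeExp m p (fun x => |d x|) = 0 := by
    refine le_antisymm (not_lt.1 hn) ?_
    rw [← exp_one m p 0]
    exact exp_mono h0 h1 fun x => abs_nonneg _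
  have hw : ∀ x : Fin m → Bool, 0 < cubeWeight m p x := fun x =>
    Finset.prod_pos fun i _ => by split_ifs <;> linarith
  have h2 := (Finset.sum_eq_zero_iff_of_nonneg
    (fun x _ => mul_nonneg (hw x).le (abs_nonneg (d x)))).1 h
  have hz : ∀ x, d x = 0 := fun x => by
    have := h2 x (Finset.mem_univ x)
    rcases mul_eq_zero.1 this with h | h
    · exact absurd h (hw x).ne'
    · exact abs_eq_zero.1 h
  simp only [hz] at hd
  simp [cubeExp] at hd

lemma ent_lower {m : ℕ} {p : ℝ} (h0 : 0 < p) (h1 : p < 1) (d : (Fin m → Bool) → ℝ)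
    (hd : 0 < cubeExp m p (fun x => d x ^ 2)) :
    cubeExp m p (fun x => d x ^ 2) * (2 * Real.log (cubeExp m p (fun x => d x ^ 2) / cubeExp m p (fun x => |d x|)))
      ≤ cubeExp m p (fun x => d x ^ 2 * Real.log (d x ^ 2)) := by
  have h1p := exp_abs_pos h0 h1 d hd
  set M2 := cubeExp m p (fun x => d x ^ 2) with hM2
  set M1 := cubeExp m p (fun x => |d x|) with hM1
  have hpt : ∀ x, d x ^ 2 * (2 * Real.log (M2 / M1)) + 2 * (d x ^ 2 - (M2 / M1) * |d x|) ≤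
      d x ^ 2 * Real.log (d x ^ 2) := by
    intro x
    rcases eq_or_ne (d x) 0 with h | h
    · simp [h]
    · have ha : 0 < |d x| := abs_pos.2 h
      have hl := Real.one_sub_inv_le_log_of_pos (x := |d x| / (M2 / M1)) (by positivity)
      rw [Real.log_div ha.ne' (by positivity)] at hl
      have hs := mul_le_mul_of_nonneg_left hl (sq_nonneg |d x|)
      have e : |d x| ^ 2 * (1 - (|d x| / (M2 / M1))⁻¹) = |d x| ^ 2 - M2 / M1 * |d x| := by
        field_simp
      rw [e] at hs
      rw [← sq_abs, Real.log_pow]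
      push_cast
      linarith
  have := exp_mono h0 h1 hpt
  rw [exp_add] at this
  have e1 : cubeExp m p (fun x => d x ^ 2 * (2 * Real.log (M2 / M1))) = M2 * (2 * Real.log (M2 / M1)) := by
    simp_rw [mul_comm (d _ ^ 2)]
    rw [exp_smul, mul_comm]
  have e2 : cubeExp m p (fun x => 2 * (d x ^ 2 - (M2 / M1) * |d x|)) = 0 := by
    rw [exp_smul, exp_sub, exp_smul, ← hM1, ← hM2]
    field_simp
    ring
  rw [e1, e2] at this
  linarith

lemma lsi {m : ℕ} {p : ℝ} (h0 : 0 < p) (h1 : p < 1) (hp' : p ≠ 1/2)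
    (d : (Fin m → Bool) → ℝ) (hd : 0 < cubeExp m p (fun x => d x ^ 2)) :
    cubeExp m p (fun x => d x ^ 2 * Real.log (d x ^ 2)) -
      cubeExp m p (fun x => d x ^ 2) * Real.log (cubeExp m p (fun x => d x ^ 2)) ≤
      ((1 - 2 * p) / Real.log ((1 - p) / p))⁻¹ * calE₂ m p d := by
  set M2 := cubeExp m p (fun x => d x ^ 2) with hM2
  have hε : ∀ ε : ℝ, 0 < ε → cubeExp m p (fun x => d x ^ 2 * Real.log (d x ^ 2)) -
      M2 * Real.log (M2 + ε) ≤ ((1 - 2 * p) / Real.log ((1 - p) / p))⁻¹ * calE₂ m p d := by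
    intro ε hε
    refine le_trans ?_ (lsi_dual h0 h1 hp' d (fun x => d x ^ 2 + ε) (fun x => by positivity))
    rw [exp_add, exp_one, ← hM2, mul_comm M2, hM2, ← exp_smul, ← exp_sub]
    refine exp_mono h0 h1 fun x => ?_
    rcases eq_or_ne (d x) 0 with h | h
    · simp [h]
    · have hs : 0 < d x ^ 2 := by positivity
      have := Real.log_le_log hs (show d x ^ 2 ≤ d x ^ 2 + ε by linarith)
      rw [← hM2]
      nlinarith
  have hc : ContinuousAt (fun ε : ℝ => cubeExp m p (fun x => d x ^ 2 * Real.log (d x ^ 2)) -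
      M2 * Real.log (M2 + ε)) 0 := by
    apply ContinuousAt.sub continuousAt_const
    apply ContinuousAt.mul continuousAt_const
    apply ContinuousAt.log (by fun_prop)
    simpa using hd.ne'
  have ht := hc.tendsto.mono_left (nhdsWithin_le_nhds (s := Set.Ioi 0))
  simp only [add_zero] at ht
  exact le_of_tendsto ht (by filter_upwards [self_mem_nhdsWithin] with ε he using hε ε he)

lemma exp_sq_nonneg {m : ℕ} {p : ℝ} (h0 : 0 < p) (h1 : p < 1) (d : (Fin m → Bool) → ℝ) :
    0 ≤ cubeExp m p (fun x => d x ^ 2) := by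
  rw [← exp_one m p 0]
  exact exp_mono h0 h1 fun x => sq_nonneg _

lemma sum_calE₂ {m : ℕ} {p : ℝ} (f : (Fin m → Bool) → ℝ) :
    ∑ j ∈ Finset.range m, calE₂ m p (mdiff m p j f) ≤ calE₂ m p f := by
  unfold calE₂
  rw [Finset.sum_comm]
  refine Finset.sum_le_sum fun e _ => ?_
  simp only [sq_abs, delta_mdiff]
  rw [sum_mdiff]
  nlinarith [sq_nonneg (cubeExp m p (delta m p f e))]

/-- **Falik–Samorodnitsky variance bound:**
`((1−2p)/log((1−p)/p)) · var(f) · log(var(f)/ℰ₁(f)) ≤ ℰ₂(f)`. -/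
theorem falik_samorodnitsky (m : ℕ) (hm : 0 < m) (p : ℝ)
    (hp : p ∈ Set.Ioo (0 : ℝ) 1) (hp' : p ≠ 1 / 2)
    (f : (Fin m → Bool) → ℝ) (hf : 0 < cubeVar m p f) :
    (1 - 2 * p) / Real.log ((1 - p) / p) * cubeVar m p f *
        Real.log (cubeVar m p f / calE₁ m p f) ≤ calE₂ m p f := by
  obtain ⟨h0, h1⟩ := hp
  have hK := const_pos h0 h1 hp'
  set K := (1 - 2 * p) / Real.log ((1 - p) / p) with hKdef
  set V := cubeVar m p f with hV
  set I : Fin m → ℝ := fun e => cubeExp m p fun x => |delta m p f e x| with hI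
  have hE1 : calE₁ m p f = ∑ e, I e ^ 2 := rfl
  set E1 := calE₁ m p f with hE1def
  have hsumV : ∑ j ∈ Finset.range m, cubeExp m p (fun x => mdiff m p j f x ^ 2) = V := by
    rw [sum_mdiff, hV, var_eq]
  have hE2nn : 0 ≤ calE₂ m p f := by
    refine Finset.sum_nonneg fun e _ => ?_
    exact exp_sq_nonneg h0 h1 _
  have hE1nn : 0 ≤ E1 := by rw [hE1]; positivity
  rcases hE1nn.eq_or_lt with hz | hE1p
  · rw [← hz]; simpa using hE2nn
  have step : ∀ e : Fin m, cubeExp m p (fun x => mdiff m p e f x ^ 2) * Real.log (V / E1) +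
      (cubeExp m p (fun x => mdiff m p e f x ^ 2) - I e ^ 2 * (V / E1)) ≤
      K⁻¹ * calE₂ m p (mdiff m p e f) := by
    intro e
    have hnn := exp_sq_nonneg h0 h1 (mdiff m p e f)
    rcases hnn.eq_or_lt with hz | hd
    · rw [← hz]
      have h2 : 0 ≤ K⁻¹ * calE₂ m p (mdiff m p e f) := by
        refine mul_nonneg (by positivity) ?_
        exact Finset.sum_nonneg fun e _ => exp_sq_nonneg h0 h1 _
      have h3 : 0 ≤ I e ^ 2 * (V / E1) := by positivity
      linarith
    · have b1 := lsi h0 h1 hp' _ hd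
      have b2 := ent_lower h0 h1 _ hd
      have b3 := exp_abs_pos h0 h1 _ hd
      have b4 : cubeExp m p (fun x => |mdiff m p e f x|) ≤ I e := by
        rw [mdiff_eq p e.2]
        exact exp_abs_avgS h0 h1 _ _
      rw [← hKdef] at b1
      set M2 := cubeExp m p (fun x => mdiff m p e f x ^ 2)
      set M1 := cubeExp m p (fun x => |mdiff m p e f x|)
      have hIp : 0 < I e := lt_of_lt_of_le b3 b4
      have hlogI := Real.log_le_log b3 b4
      rw [Real.log_div hd.ne' b3.ne'] at b2
      have hl := Real.one_sub_inv_le_log_of_pos (x := M2 / (I e ^ 2 * (V / E1))) (by positivity)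
      rw [Real.log_div hd.ne' (by positivity), Real.log_mul (by positivity) (by positivity),
        Real.log_pow] at hl
      push_cast at hl
      have hs := mul_le_mul_of_nonneg_left hl hd.le
      have e1 : M2 * (1 - (M2 / (I e ^ 2 * (V / E1)))⁻¹) = M2 - I e ^ 2 * (V / E1) := by
        field_simp
      rw [e1] at hs
      have h5 := mul_le_mul_of_nonneg_left hlogI hd.le
      linarith
  have tot := Finset.sum_le_sum (s := Finset.univ) fun e _ => step e
  rw [Finset.sum_add_distrib, Finset.sum_sub_distrib, ← Finset.sum_mul, ← Finset.sum_mul,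
    ← Finset.mul_sum, ← hE1] at tot
  rw [Finset.sum_range] at hsumV
  have hc := sum_calE₂ (p := p) f
  rw [Finset.sum_range] at hc
  rw [hsumV] at tot
  have e2 : E1 * (V / E1) = V := by field_simp
  rw [e2] at tot
  have t2 : V * Real.log (V / E1) ≤ K⁻¹ * calE₂ m p f := by
    have := mul_le_mul_of_nonneg_left hc (show 0 ≤ K⁻¹ by positivity)
    linarith
  have t3 := mul_le_mul_of_nonneg_left t2 hK.le
  rw [← mul_assoc, ← mul_assoc, mul_inv_cancel₀ hK.ne', one_mul] at t3
  exact t3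

end
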